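/- Let s ∈ (0,1), γ ∈ ℝ with γ + 2s > 0, c = max{0, −γ/2}, K₀ ≥ 1, and let δ₁, δ₂ satisfy 0 < δ₁ ≤ 1, δ₂ > 0, δ₁ ≤ δ₂, δ₁/δ₂ + c ≤ s, and (δ₁−1)/δ₂ ≤ γ + 2s − 2. Let χ₀ : ℝ → ℝ be differentiable with 0 ≤ χ₀ ≤ 1, χ₀(z) = 1 for |z| ≤ 1/2, χ₀(z) = 0 for |z| ≥ 1, |χ₀′| ≤ C₀, and χ₀′(z) = 0 whenever |z| < 1/2 or |z| > 1. For v, y, η ∈ ℝ^d set A = 1 + |v|² + |η|² + |v∧η|², B = 1 + |v|² + |y|² + |v∧y|², χ = χ₀(A/B^{δ₂}), I₁ = B^{δ₁}(χ − 1), I₂ = −(1+|v|²)B^{δ₁−1}χ, and I₃ = 2B^{δ₁−1−δ₂}(⟨y,η⟩ + (v∧y)·(v∧η))² χ₀′(A/B^{δ₂}). Then with C = 2^{δ₁/δ₂} + 1 + 2C₀, for all v, y, η ∈ ℝ^d: |I₁| + |I₂| + |I₃| ≤ C · a(v,η), where a(v,η) = ⟨v⟩^γ A^s + K₀⟨v⟩^{γ+2s}.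 -/

import Mathlib

open scoped RealInnerProductSpace

/-!
Write `w = ⟨v⟩² = 1 + |v|²` and `Q(y,η) = ⟨y,η⟩ + (v∧y)·(v∧η)`, so that `A = w + Q(η,η)` and
`B = w + Q(y,y)`. The form `Q` is positive semidefinite, hence `w ≤ A`, `w ≤ B` and `Q(y,η)² ≤ AB`.
Every error term carries a cutoff factor supported where `B^δ₂ ≤ 2A` or where `A ≤ B^δ₂`, which
trades `B` for a power of `A`:

* on `B^δ₂ ≤ 2A`, `|I₁| ≤ B^δ₁ ≤ (2A)^(δ₁/δ₂)`;
* on `A ≤ B^δ₂`, `|I₂| ≤ w B^(δ₁-1) ≤ w A^((δ₁-1)/δ₂) ≤ w^(1+(δ₁-1)/δ₂) ≤ ⟨v⟩^(γ+2s)`;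
* on `A ≤ B^δ₂`, `|I₃| ≤ 2C₀ B^(δ₁-δ₂) A ≤ 2C₀ A^(δ₁/δ₂)`.

Finally `A^(δ₁/δ₂) ≤ ⟨v⟩^γ A^s`, because `δ₁/δ₂` is at most both `s` and `s + γ/2`.
-/

section WedgeForm

variable {E : Type*} [SeminormedAddCommGroup E] [InnerProductSpace ℝ E]

/-- The bilinear form `(y, η) ↦ ⟨y,η⟩ + (v∧y)·(v∧η)`, of which the symbol `θ` and the error term
`I₃` are built; the two inner-product contributions are collected into `(1 + |v|²)⟨y,η⟩`. -/
noncomputable def wedgeForm (v : E) : LinearMap.BilinForm ℝ E :=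
  (1 + ‖v‖ ^ 2) • innerₗ E - LinearMap.BilinForm.linMulLin (innerₗ E v) (innerₗ E v)

/-- The weight `1 + |v|² + |x|² + |v∧x|²`, which is `A` at `x = η` and `B` at `x = y`. -/
noncomputable def wedgeWeight (v x : E) : ℝ :=
  1 + ‖v‖ ^ 2 + ‖x‖ ^ 2 + (‖v‖ ^ 2 * ‖x‖ ^ 2 - ⟪v, x⟫ ^ 2)

lemma wedgeForm_apply (v y η : E) :
    wedgeForm v y η = ⟪y, η⟫ + (‖v‖ ^ 2 * ⟪y, η⟫ - ⟪v, y⟫ * ⟪v, η⟫) := by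
  simp only [wedgeForm, LinearMap.sub_apply, LinearMap.smul_apply, innerₗ_apply_apply,
    LinearMap.BilinForm.linMulLin_apply, smul_eq_mul]
  ring

lemma wedgeForm_isSymm (v : E) : LinearMap.IsSymm (wedgeForm v) where
  eq y η := by
    simp only [wedgeForm_apply, RingHom.id_apply, real_inner_comm y η]
    ring

lemma wedgeForm_self_nonneg (v x : E) : 0 ≤ wedgeForm v x x := by
  have hCS := real_inner_mul_inner_self_le v x
  rw [wedgeForm_apply]
  rw [real_inner_self_eq_norm_sq v] at hCS
  linarith [real_inner_self_nonneg (x := x)]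

lemma wedgeForm_sq_le (v y η : E) :
    wedgeForm v y η ^ 2 ≤ wedgeForm v y y * wedgeForm v η η :=
  (wedgeForm v).apply_sq_le_of_symm (wedgeForm_self_nonneg v) (wedgeForm_isSymm v) y η

lemma wedgeWeight_eq_add_wedgeForm (v x : E) :
    wedgeWeight v x = 1 + ‖v‖ ^ 2 + wedgeForm v x x := by
  rw [wedgeWeight, wedgeForm_apply, real_inner_self_eq_norm_sq]
  ring

lemma one_add_norm_sq_le_wedgeWeight (v x : E) : 1 + ‖v‖ ^ 2 ≤ wedgeWeight v x := by
  rw [wedgeWeight_eq_add_wedgeForm]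
  exact le_add_of_nonneg_right (wedgeForm_self_nonneg v x)

lemma wedgeWeight_pos (v x : E) : 0 < wedgeWeight v x :=
  lt_of_lt_of_le (by positivity) (one_add_norm_sq_le_wedgeWeight v x)

lemma wedgeForm_le_wedgeWeight (v x : E) : wedgeForm v x x ≤ wedgeWeight v x := by
  rw [wedgeWeight_eq_add_wedgeForm]
  exact le_add_of_nonneg_left (by positivity)

lemma wedgeForm_sq_le_wedgeWeight_mul (v y η : E) :
    wedgeForm v y η ^ 2 ≤ wedgeWeight v η * wedgeWeight v y :=
  calc wedgeForm v y η ^ 2 ≤ wedgeForm v η η * wedgeForm v y y :=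
        (wedgeForm_sq_le v y η).trans_eq (mul_comm _ _)
    _ ≤ wedgeWeight v η * wedgeWeight v y :=
        mul_le_mul (wedgeForm_le_wedgeWeight v η) (wedgeForm_le_wedgeWeight v y)
          (wedgeForm_self_nonneg v y) (wedgeWeight_pos v η).le

end WedgeForm

section RealPowers

variable {w A B δ e q s p M t : ℝ}

lemma rpow_rpow_div_cancel (hB : 0 ≤ B) (hδ : δ ≠ 0) (e : ℝ) : (B ^ δ) ^ (e / δ) = B ^ e := by
  rw [← Real.rpow_mul hB, mul_div_cancel₀ e hδ]

lemma abs_rpow_mul_le_of_rpow_le (hB : 0 ≤ B) (hA : 0 ≤ A) (hδ : 0 < δ) (he : 0 ≤ e)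
    (ht : |t| ≤ M) (hsupp : t ≠ 0 → B ^ δ ≤ A) : |B ^ e * t| ≤ M * A ^ (e / δ) := by
  have hM : 0 ≤ M := (abs_nonneg t).trans ht
  rcases eq_or_ne t 0 with rfl | ht0
  · rw [mul_zero, abs_zero]
    positivity
  have hBA : B ^ e ≤ A ^ (e / δ) :=
    calc B ^ e = (B ^ δ) ^ (e / δ) := (rpow_rpow_div_cancel hB hδ.ne' e).symm
      _ ≤ A ^ (e / δ) := by have := hsupp ht0; gcongr
  calc |B ^ e * t| = |t| * B ^ e := by rw [abs_mul, abs_of_nonneg (by positivity), mul_comm]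
    _ ≤ M * A ^ (e / δ) := by gcongr

lemma abs_rpow_mul_le_of_le_rpow (hB : 0 ≤ B) (hA : 0 < A) (hδ : 0 < δ) (he : e ≤ 0)
    (ht : |t| ≤ M) (hsupp : t ≠ 0 → A ≤ B ^ δ) : |B ^ e * t| ≤ M * A ^ (e / δ) := by
  have hM : 0 ≤ M := (abs_nonneg t).trans ht
  rcases eq_or_ne t 0 with rfl | ht0
  · rw [mul_zero, abs_zero]
    positivity
  have hBA : B ^ e ≤ A ^ (e / δ) :=
    calc B ^ e = (B ^ δ) ^ (e / δ) := (rpow_rpow_div_cancel hB hδ.ne' e).symm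
      _ ≤ A ^ (e / δ) :=
        Real.rpow_le_rpow_of_nonpos hA (hsupp ht0) (div_nonpos_of_nonpos_of_nonneg he hδ.le)
  calc |B ^ e * t| = |t| * B ^ e := by rw [abs_mul, abs_of_nonneg (by positivity), mul_comm]
    _ ≤ M * A ^ (e / δ) := by gcongr

lemma abs_mul_rpow_mul_le_rpow (hw : 1 ≤ w) (hwA : w ≤ A) (hB : 0 ≤ B) (hδ : 0 < δ) (he : e ≤ 0)
    (hq : 1 + e / δ ≤ q) (ht : |t| ≤ M) (hsupp : t ≠ 0 → A ≤ B ^ δ) :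
    |w * B ^ e * t| ≤ M * w ^ q := by
  have hw0 : 0 < w := one_pos.trans_le hw
  have hM : 0 ≤ M := (abs_nonneg t).trans ht
  calc |w * B ^ e * t| = w * |B ^ e * t| := by rw [mul_assoc, abs_mul, abs_of_pos hw0]
    _ ≤ w * (M * A ^ (e / δ)) := by
        gcongr
        exact abs_rpow_mul_le_of_le_rpow hB (hw0.trans_le hwA) hδ he ht hsupp
    _ ≤ w * (M * w ^ (e / δ)) := by
        gcongr w * (M * ?_)
        exact Real.rpow_le_rpow_of_nonpos hw0 hwA (div_nonpos_of_nonpos_of_nonneg he hδ.le)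
    _ = M * w ^ (1 + e / δ) := by
        rw [Real.rpow_add hw0, Real.rpow_one]
        ring
    _ ≤ M * w ^ q := by gcongr

lemma abs_rpow_mul_sq_mul_le_rpow (hA : 0 < A) (hB : 0 < B) (hδ : 0 < δ) (he : e ≤ δ)
    (hq : q ^ 2 ≤ A * B) (ht : |t| ≤ M) (hsupp : t ≠ 0 → A ≤ B ^ δ) :
    |B ^ (e - 1 - δ) * q ^ 2 * t| ≤ M * A ^ (e / δ) :=
  calc |B ^ (e - 1 - δ) * q ^ 2 * t| = B ^ (e - 1 - δ) * q ^ 2 * |t| := by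
        rw [abs_mul, abs_of_nonneg (by positivity)]
    _ ≤ B ^ (e - 1 - δ) * (A * B) * |t| := by gcongr
    _ = A * |B ^ (e - δ) * t| := by
        rw [show e - δ = e - 1 - δ + 1 by ring, Real.rpow_add_one hB.ne', abs_mul,
          abs_of_nonneg (mul_nonneg (Real.rpow_nonneg hB.le _) hB.le)]
        ring
    _ ≤ A * (M * A ^ ((e - δ) / δ)) := by
        gcongr
        exact abs_rpow_mul_le_of_le_rpow hB.le hA hδ (sub_nonpos.2 he) ht hsupp
    _ = M * A ^ (e / δ) := by
        rw [sub_div, div_self hδ.ne', Real.rpow_sub_one hA.ne']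
        field_simp

lemma rpow_le_rpow_mul_rpow (hw : 1 ≤ w) (hwA : w ≤ A) (hps : p ≤ s) (hpqs : p ≤ q + s) :
    A ^ p ≤ w ^ q * A ^ s := by
  have hw0 : 0 < w := one_pos.trans_le hw
  have hA1 : 1 ≤ A := hw.trans hwA
  have hA0 : 0 < A := hw0.trans_le hwA
  rcases le_total 0 q with hq | hq
  · calc A ^ p ≤ A ^ s := by gcongr
      _ ≤ w ^ q * A ^ s := le_mul_of_one_le_left (by positivity) (Real.one_le_rpow hw hq)
  · calc A ^ p ≤ A ^ (q + s) := by gcongr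
      _ = A ^ q * A ^ s := Real.rpow_add hA0 q s
      _ ≤ w ^ q * A ^ s := by
          gcongr ?_ * A ^ s
          exact Real.rpow_le_rpow_of_nonpos hw0 hwA hq

end RealPowers

section Cutoff

variable {χ χ' : ℝ → ℝ} {w A B δ e p q M : ℝ}

lemma le_rpow_of_abs_div_rpow_le_one (hB : 0 < B) (hz : |A / B ^ δ| ≤ 1) : A ≤ B ^ δ :=
  (div_le_one (Real.rpow_pos_of_pos hB δ)).1 ((le_abs_self _).trans hz)

lemma abs_le_of_deriv_ne_zero {F : Type*} [NormedAddCommGroup F] [NormedSpace ℝ F] {f : ℝ → F}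
    {r z : ℝ} (hf : ∀ x, r < |x| → f x = 0) (hz : deriv f z ≠ 0) : |z| ≤ r := by
  have htsupport : tsupport f ⊆ {x | |x| ≤ r} :=
    closure_minimal (fun x hx ↦ not_lt.1 fun hrx ↦ hx (hf x hrx))
      (isClosed_le continuous_abs continuous_const)
  exact htsupport (support_deriv_subset hz)

lemma abs_rpow_mul_cutoff_sub_one_le (hA : 0 ≤ A) (hB : 0 < B) (hδ : 0 < δ) (he : 0 ≤ e)
    (hrange : ∀ z, 0 ≤ χ z ∧ χ z ≤ 1) (hone : ∀ z, |z| ≤ 1 / 2 → χ z = 1) :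
    |B ^ e * (χ (A / B ^ δ) - 1)| ≤ 2 ^ (e / δ) * A ^ (e / δ) := by
  have hBδ : 0 < B ^ δ := Real.rpow_pos_of_pos hB δ
  obtain ⟨hχ0, hχ1⟩ := hrange (A / B ^ δ)
  have hχ : |χ (A / B ^ δ) - 1| ≤ 1 := abs_le.2 ⟨by linarith, by linarith⟩
  have hsupp (hne : χ (A / B ^ δ) - 1 ≠ 0) : B ^ δ ≤ 2 * A := by
    have hz : 1 / 2 < |A / B ^ δ| := not_le.1 fun hz ↦ hne (sub_eq_zero.2 (hone _ hz))
    rw [abs_of_nonneg (by positivity), lt_div_iff₀ hBδ] at hz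
    linarith
  calc |B ^ e * (χ (A / B ^ δ) - 1)| ≤ 1 * (2 * A) ^ (e / δ) :=
        abs_rpow_mul_le_of_rpow_le hB.le (by positivity) hδ he hχ hsupp
    _ = 2 ^ (e / δ) * A ^ (e / δ) := by rw [one_mul, Real.mul_rpow zero_le_two hA]

lemma abs_mul_rpow_mul_cutoff_le (hw : 1 ≤ w) (hwA : w ≤ A) (hB : 0 < B) (hδ : 0 < δ)
    (he : e ≤ 0) (hp : 1 + e / δ ≤ p) (hM : ∀ z, |χ z| ≤ M) (hzero : ∀ z, 1 < |z| → χ z = 0) :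
    |w * B ^ e * χ (A / B ^ δ)| ≤ M * w ^ p :=
  abs_mul_rpow_mul_le_rpow hw hwA hB.le hδ he hp (hM _) fun hne ↦
    le_rpow_of_abs_div_rpow_le_one hB (not_lt.1 fun hz ↦ hne (hzero _ hz))

lemma abs_rpow_mul_sq_mul_deriv_cutoff_le (hA : 0 < A) (hB : 0 < B) (hδ : 0 < δ) (he : e ≤ δ)
    (hq : q ^ 2 ≤ A * B) (hderiv : ∀ z, HasDerivAt χ (χ' z) z)
    (hzero : ∀ z, 1 < |z| → χ z = 0) (hM : ∀ z, |χ' z| ≤ M) :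
    |B ^ (e - 1 - δ) * q ^ 2 * χ' (A / B ^ δ)| ≤ M * A ^ (e / δ) :=
  abs_rpow_mul_sq_mul_le_rpow hA hB hδ he hq (hM _) fun hne ↦
    le_rpow_of_abs_div_rpow_le_one hB
      (abs_le_of_deriv_ne_zero hzero ((hderiv _).deriv.trans_ne hne))

end Cutoff

theorem stmt_17_general {E : Type*} [SeminormedAddCommGroup E] [InnerProductSpace ℝ E]
    {s γ K₀ δ₁ δ₂ C₀ : ℝ} (hK₀ : 1 ≤ K₀)
    (hδ₁0 : 0 ≤ δ₁) (hδ₁1 : δ₁ ≤ 1) (hδ₂ : 0 < δ₂) (hδ₁₂ : δ₁ ≤ δ₂)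
    (hδs : δ₁ / δ₂ + max 0 (-γ / 2) ≤ s) (hδγ : (δ₁ - 1) / δ₂ ≤ γ + 2 * s - 2)
    {χ₀ χ₀' : ℝ → ℝ} (hderiv : ∀ z, HasDerivAt χ₀ (χ₀' z) z)
    (hrange : ∀ z, 0 ≤ χ₀ z ∧ χ₀ z ≤ 1)
    (hone : ∀ z, |z| ≤ 1 / 2 → χ₀ z = 1) (hzero : ∀ z, 1 < |z| → χ₀ z = 0)
    (hC₀ : ∀ z, |χ₀' z| ≤ C₀)
    (v y η : E) {A B : ℝ} (hA : A = wedgeWeight v η) (hB : B = wedgeWeight v y) :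
    |B ^ δ₁ * (χ₀ (A / B ^ δ₂) - 1)| + |-((1 + ‖v‖ ^ 2) * B ^ (δ₁ - 1) * χ₀ (A / B ^ δ₂))| +
        |2 * B ^ (δ₁ - 1 - δ₂) * wedgeForm v y η ^ 2 * χ₀' (A / B ^ δ₂)| ≤
      (2 ^ (δ₁ / δ₂) + 1 + 2 * C₀) *
        (√(1 + ‖v‖ ^ 2) ^ γ * A ^ s + K₀ * √(1 + ‖v‖ ^ 2) ^ (γ + 2 * s)) := by
  have hw : 1 ≤ 1 + ‖v‖ ^ 2 := le_add_of_nonneg_right (sq_nonneg _)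
  have hwA : 1 + ‖v‖ ^ 2 ≤ A := hA ▸ one_add_norm_sq_le_wedgeWeight v η
  have hA0 : 0 < A := hA ▸ wedgeWeight_pos v η
  have hB0 : 0 < B := hB ▸ wedgeWeight_pos v y
  have hQ : wedgeForm v y η ^ 2 ≤ A * B := hA ▸ hB ▸ wedgeForm_sq_le_wedgeWeight_mul v y η
  have hC₀0 : 0 ≤ C₀ := (abs_nonneg _).trans (hC₀ 0)
  have hχ₀ (z : ℝ) : |χ₀ z| ≤ 1 := (abs_of_nonneg (hrange z).1).trans_le (hrange z).2
  have hexp : (δ₁ - 1) / δ₂ ≤ 0 := div_nonpos_of_nonpos_of_nonneg (by linarith) hδ₂.le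
  rw [abs_neg, mul_assoc 2, mul_assoc 2, abs_mul 2, abs_two,
    ← Real.rpow_div_two_eq_sqrt γ (by positivity),
    ← Real.rpow_div_two_eq_sqrt (γ + 2 * s) (by positivity)]
  set w := 1 + ‖v‖ ^ 2
  set X := w ^ (γ / 2) * A ^ s
  set Y := w ^ ((γ + 2 * s) / 2)
  have hAX : A ^ (δ₁ / δ₂) ≤ X :=
    rpow_le_rpow_mul_rpow hw hwA (by linarith [le_max_left 0 (-γ / 2)])
      (by linarith [le_max_right 0 (-γ / 2)])
  have hX : 0 ≤ X := by positivity
  have hY : 0 ≤ Y := by positivity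
  have hYK₀ : Y ≤ K₀ * Y := le_mul_of_one_le_left hY hK₀
  calc _ ≤ 2 ^ (δ₁ / δ₂) * A ^ (δ₁ / δ₂) + 1 * Y + 2 * (C₀ * A ^ (δ₁ / δ₂)) := by
        gcongr
        · exact abs_rpow_mul_cutoff_sub_one_le hA0.le hB0 hδ₂ hδ₁0 hrange hone
        · exact abs_mul_rpow_mul_cutoff_le hw hwA hB0 hδ₂ (by linarith) (by linarith) hχ₀ hzero
        · exact abs_rpow_mul_sq_mul_deriv_cutoff_le hA0 hB0 hδ₂ hδ₁₂ hQ hderiv hzero hC₀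
    _ ≤ 2 ^ (δ₁ / δ₂) * (X + K₀ * Y) + 1 * (X + K₀ * Y) + 2 * (C₀ * (X + K₀ * Y)) := by
        gcongr <;> linarith
    _ = (2 ^ (δ₁ / δ₂) + 1 + 2 * C₀) * (X + K₀ * Y) := by ring

/-- The error terms `I₁, I₂, I₃` of the Poisson bracket decomposition of the
regularizing symbol `θ` are bounded by the weight
`a(v,η) = ⟨v⟩^γ A^s + K₀⟨v⟩^{γ+2s}`: with `C = 2^{δ₁/δ₂} + 1 + 2C₀`,
`|I₁| + |I₂| + |I₃| ≤ C·a(v,η)` for all `v, y, η ∈ ℝ^d`. -/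
theorem stmt_17 (s γ K₀ c δ₁ δ₂ C₀ : ℝ)
    (hs0 : 0 < s) (hs1 : s < 1) (hγ : 0 < γ + 2 * s)
    (hc : c = max 0 (-γ / 2)) (hK₀ : 1 ≤ K₀)
    (hδ₁0 : 0 < δ₁) (hδ₁1 : δ₁ ≤ 1) (hδ₂ : 0 < δ₂) (hδ₁₂ : δ₁ ≤ δ₂)
    (hδs : δ₁ / δ₂ + c ≤ s) (hδγ : (δ₁ - 1) / δ₂ ≤ γ + 2 * s - 2)
    (χ₀ : ℝ → ℝ) (hdiff : Differentiable ℝ χ₀)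
    (hrange : ∀ z, 0 ≤ χ₀ z ∧ χ₀ z ≤ 1)
    (hone : ∀ z, |z| ≤ 1 / 2 → χ₀ z = 1)
    (hzero : ∀ z, 1 ≤ |z| → χ₀ z = 0)
    (hC₀ : ∀ z, |deriv χ₀ z| ≤ C₀)
    (hderiv0 : ∀ z, |z| < 1 / 2 ∨ 1 < |z| → deriv χ₀ z = 0)
    (d : ℕ) (v y η : EuclideanSpace ℝ (Fin d))
    (A B χv I₁ I₂ I₃ : ℝ)
    (hA : A = 1 + ‖v‖ ^ 2 + ‖η‖ ^ 2 + (‖v‖ ^ 2 * ‖η‖ ^ 2 - ⟪v, η⟫ ^ 2))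
    (hB : B = 1 + ‖v‖ ^ 2 + ‖y‖ ^ 2 + (‖v‖ ^ 2 * ‖y‖ ^ 2 - ⟪v, y⟫ ^ 2))
    (hχv : χv = χ₀ (A / B ^ δ₂))
    (hI₁ : I₁ = B ^ δ₁ * (χv - 1))
    (hI₂ : I₂ = -((1 + ‖v‖ ^ 2) * B ^ (δ₁ - 1) * χv))
    (hI₃ : I₃ = 2 * B ^ (δ₁ - 1 - δ₂) *
      (⟪y, η⟫ + (‖v‖ ^ 2 * ⟪y, η⟫ - ⟪v, y⟫ * ⟪v, η⟫)) ^ 2 *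
      deriv χ₀ (A / B ^ δ₂)) :
    |I₁| + |I₂| + |I₃| ≤
      (2 ^ (δ₁ / δ₂) + 1 + 2 * C₀) *
        (Real.sqrt (1 + ‖v‖ ^ 2) ^ γ * A ^ s +
          K₀ * Real.sqrt (1 + ‖v‖ ^ 2) ^ (γ + 2 * s)) := by
  subst hc hχv hI₁ hI₂ hI₃
  simpa only [wedgeForm_apply] using
    stmt_17_general hK₀ hδ₁0.le hδ₁1 hδ₂ hδ₁₂ hδs hδγ (fun z ↦ (hdiff z).hasDerivAt)
      hrange hone (fun z hz ↦ hzero z hz.le) hC₀ v y η hA hB
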